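/- Consider the 9×9 matrix ρ on ℂ³ ⊗ ℂ³ (basis ordered 00,01,02,10,11,12,20,21,22) given by ρ = (1/16)·[diagonal entries 1,2,2,2,1,2,2,2,2; off-diagonal entries ρ_{01,10} = ρ_{10,01} = −1/16, ρ_{02,20} = ρ_{20,02} = 2/16, ρ_{12,21} = ρ_{21,12} = 2/16; all other entries zero]. Then: (a) ρ is a density matrix satisfying the reduction criterion, i.e. 𝟙 ⊗ ρ_B − ρ and ρ_A ⊗ 𝟙 − ρ are both positive semidefinite; (b) the unit vector ψ = (|00⟩ + |11⟩ − |22⟩)/√3 satisfies ρ^{T_B} ψ = −(1/8) ψ; and (c) there exists a nonzero vector φ of Schmidt rank at most 2 with φ† ρ^{T_B} φ < 0, so ρ is 1-distillable. -/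

import Mathlib

open Matrix BigOperators Kronecker ComplexOrder

/-- The d×d matrix `M_v` associated with a vector `v` on ℂ^d ⊗ ℂ^d, `(M_v)_{ij} = v (i,j)`. -/
def toMat (d : ℕ) (v : Fin d × Fin d → ℂ) : Matrix (Fin d) (Fin d) ℂ :=
  Matrix.of fun i j => v (i, j)

/-- `ρ` has Schmidt number at most `n`: it is a finite sum of `w wᴴ` with each `w` of
Schmidt rank (i.e. rank of the associated d×d matrix) at most `n`. -/
def SchmidtNumberLE (d : ℕ) (ρ : Matrix (Fin d × Fin d) (Fin d × Fin d) ℂ) (n : ℕ) : Prop :=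
  ∃ (k : ℕ) (w : Fin k → (Fin d × Fin d → ℂ)),
    (∀ i, (toMat d (w i)).rank ≤ n) ∧
    ρ = ∑ i, Matrix.vecMulVec (w i) (star (w i))

/-- The partial transpose on the second factor: `(ρ^{T_B})_{(i,j),(k,l)} = ρ_{(i,l),(k,j)}`. -/
noncomputable def ptB (d : ℕ) (ρ : Matrix (Fin d × Fin d) (Fin d × Fin d) ℂ) :
    Matrix (Fin d × Fin d) (Fin d × Fin d) ℂ :=
  Matrix.of fun p q => ρ (p.1, q.2) (q.1, p.2)

/-- The explicit 9×9 example state on ℂ³ ⊗ ℂ³. -/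
noncomputable def rho17 : Matrix (Fin 3 × Fin 3) (Fin 3 × Fin 3) ℂ :=
  Matrix.of fun p q =>
    (1 / 16 : ℂ) *
      (if p = q then (if p = (0, 0) ∨ p = (1, 1) then 1 else 2)
       else if (p = (0, 1) ∧ q = (1, 0)) ∨ (p = (1, 0) ∧ q = (0, 1)) then -1
       else if (p = (0, 2) ∧ q = (2, 0)) ∨ (p = (2, 0) ∧ q = (0, 2)) then 2
       else if (p = (1, 2) ∧ q = (2, 1)) ∨ (p = (2, 1) ∧ q = (1, 2)) then 2
       else 0)

/-- Reduced density matrix on the first factor. -/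
noncomputable def rhoA17 : Matrix (Fin 3) (Fin 3) ℂ :=
  Matrix.of fun i k => ∑ j, rho17 (i, j) (k, j)

/-- Reduced density matrix on the second factor. -/
noncomputable def rhoB17 : Matrix (Fin 3) (Fin 3) ℂ :=
  Matrix.of fun j l => ∑ i, rho17 (i, j) (i, l)

/-- The vector `ψ = (|00⟩ + |11⟩ - |22⟩)/√3`. -/
noncomputable def psi17 : Fin 3 × Fin 3 → ℂ := fun p =>
  ((if p = (0, 0) then 1 else 0) + (if p = (1, 1) then 1 else 0) -
      (if p = (2, 2) then 1 else 0)) / ((Real.sqrt 3 : ℝ) : ℂ)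

/-!
The state is a diagonal operator plus a weighted flip: `|ij⟩ ↦ A i j |ij⟩ + B j i |ji⟩`. This shape
is kept by `𝟙 ⊗ ρ_B - ·` and `ρ_A ⊗ 𝟙 - ·`, since the reduced matrices are diagonal, and it is
positive semidefinite as soon as `B` is Hermitian and `‖B i j‖ ≤ A i j`, by Gershgorin's theorem.
The partial transpose of such an operator acts on the span of the vectors `|ii⟩` as
`diagonal A.diag + B`, so its spectral properties there are those of a `3 × 3` matrix.
-/

section DiagonalDominance

variable {n 𝕜 : Type*} [Fintype n] [DecidableEq n] [RCLike 𝕜]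

theorem posSemidef_of_sum_norm_le_diag {A : Matrix n n 𝕜} (hA : A.IsHermitian)
    (hdom : ∀ i, ∑ j ∈ Finset.univ.erase i, ‖A i j‖ ≤ RCLike.re (A i i)) : A.PosSemidef := by
  rw [hA.posSemidef_iff_eigenvalues_nonneg]
  intro i
  have hmem : (hA.eigenvalues i : 𝕜) ∈ spectrum 𝕜 (toLin' A) := by
    rw [spectrum_toLin', hA.spectrum_eq_image_range]
    exact Set.mem_image_of_mem _ (Set.mem_range_self i)
  obtain ⟨k, hk⟩ := eigenvalue_mem_ball (Module.End.hasEigenvalue_iff_mem_spectrum.2 hmem)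
  rw [mem_closedBall_iff_norm'] at hk
  have hre : RCLike.re (A k k) - hA.eigenvalues i ≤ ‖A k k - hA.eigenvalues i‖ := by
    simpa using RCLike.re_le_norm (A k k - hA.eigenvalues i)
  change 0 ≤ hA.eigenvalues i
  linarith [hdom k]

end DiagonalDominance

section PartialTrace

variable {m n R : Type*} [AddCommMonoid R]

/-- The partial trace over the second tensor factor, `ρ ↦ ρ_A`. -/
def partialTraceRight [Fintype n] (ρ : Matrix (m × n) (m × n) R) : Matrix m m R :=
  of fun i k => ∑ j, ρ (i, j) (k, j)

/-- The partial trace over the first tensor factor, `ρ ↦ ρ_B`. -/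
def partialTraceLeft [Fintype m] (ρ : Matrix (m × n) (m × n) R) : Matrix n n R :=
  of fun j l => ∑ i, ρ (i, j) (i, l)

end PartialTrace

section LDUI

variable {n R : Type*} [DecidableEq n]

/-- The matrix `∑ A i j |ij⟩⟨ij| + ∑ B i j |ij⟩⟨ji|`. As `A` and `B` range over complex matrices,
these are the local diagonal unitary invariant (LDUI) matrices, i.e. those commuting with `U ⊗ U`
for every diagonal unitary `U`. The diagonals of `A` and `B` both contribute to the coefficient
of `|ii⟩⟨ii|`, which makes the parametrization linear but not injective. -/
def lduiMatrix [AddZeroClass R] (A B : Matrix n n R) : Matrix (n × n) (n × n) R :=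
  of fun p q => (if p = q then A p.1 p.2 else 0) + if p = q.swap then B p.1 p.2 else 0

theorem lduiMatrix_apply [AddZeroClass R] (A B : Matrix n n R) (i j k l : n) :
    lduiMatrix A B (i, j) (k, l) =
      (if i = k ∧ j = l then A i j else 0) + if i = l ∧ j = k then B i j else 0 := by
  simp [lduiMatrix]

theorem trace_lduiMatrix [Fintype n] [AddCommMonoid R] (A B : Matrix n n R) :
    (lduiMatrix A B).trace = ∑ i, ∑ j, A i j + B.trace := by
  simp [Matrix.trace, Fintype.sum_prod_type, lduiMatrix_apply, Finset.sum_add_distrib,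
    eq_comm]

theorem partialTraceRight_lduiMatrix [Fintype n] [AddCommMonoid R] (A B : Matrix n n R) :
    partialTraceRight (lduiMatrix A B) = diagonal fun i => ∑ j, A i j + B i i := by
  ext i k
  obtain rfl | hik := eq_or_ne i k
  · simp [partialTraceRight, lduiMatrix_apply, Finset.sum_add_distrib, ite_and]
  · simp [partialTraceRight, lduiMatrix_apply, hik, ite_and]

theorem partialTraceLeft_lduiMatrix [Fintype n] [AddCommMonoid R] (A B : Matrix n n R) :
    partialTraceLeft (lduiMatrix A B) = diagonal fun j => ∑ i, A i j + B j j := by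
  ext j l
  obtain rfl | hjl := eq_or_ne j l
  · simp [partialTraceLeft, lduiMatrix_apply, Finset.sum_add_distrib, ite_and]
  · simp [partialTraceLeft, lduiMatrix_apply, hjl, ite_and]

theorem diagonal_sub_lduiMatrix [AddCommGroup R] (d : n × n → R) (A B : Matrix n n R) :
    diagonal d - lduiMatrix A B = lduiMatrix (of fun i j => d (i, j) - A i j) (-B) := by
  ext ⟨i, j⟩ ⟨k, l⟩
  simp only [Matrix.sub_apply, Matrix.neg_apply, diagonal_apply, lduiMatrix_apply, of_apply,
    Prod.mk.injEq]
  split_ifs <;> abel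

theorem one_kronecker_partialTraceLeft_sub_lduiMatrix [Fintype n] [NonAssocRing R]
    (A B : Matrix n n R) :
    (1 : Matrix n n R) ⊗ₖ partialTraceLeft (lduiMatrix A B) - lduiMatrix A B =
      lduiMatrix (of fun i j => ∑ k, A k j + B j j - A i j) (-B) := by
  rw [partialTraceLeft_lduiMatrix, ← diagonal_one, diagonal_kronecker_diagonal,
    diagonal_sub_lduiMatrix]
  simp

theorem partialTraceRight_kronecker_one_sub_lduiMatrix [Fintype n] [NonAssocRing R]
    (A B : Matrix n n R) :
    partialTraceRight (lduiMatrix A B) ⊗ₖ (1 : Matrix n n R) - lduiMatrix A B =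
      lduiMatrix (of fun i j => ∑ k, A i k + B i i - A i j) (-B) := by
  rw [partialTraceRight_lduiMatrix, ← diagonal_one, diagonal_kronecker_diagonal,
    diagonal_sub_lduiMatrix]
  simp

theorem isHermitian_lduiMatrix [AddMonoid R] [StarAddMonoid R] {A B : Matrix n n R}
    (hA : ∀ i j, IsSelfAdjoint (A i j)) (hB : B.IsHermitian) : (lduiMatrix A B).IsHermitian := by
  ext ⟨i, j⟩ ⟨k, l⟩
  simp only [conjTranspose_apply, lduiMatrix_apply, star_add, apply_ite star, star_zero,
    (hA _ _).star_eq, hB.apply]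
  grind

variable {𝕜 : Type*} [RCLike 𝕜]

theorem posSemidef_lduiMatrix [Finite n] {A B : Matrix n n 𝕜} (hB : B.IsHermitian)
    (hBA : ∀ i j, ((‖B i j‖ : ℝ) : 𝕜) ≤ A i j) : (lduiMatrix A B).PosSemidef := by
  have := Fintype.ofFinite n
  have hA (i j : n) : IsSelfAdjoint (A i j) :=
    .of_nonneg ((RCLike.ofReal_nonneg.2 (norm_nonneg _)).trans (hBA i j))
  have hre (i j : n) : ‖B i j‖ ≤ RCLike.re (A i j) := by
    simpa using (RCLike.le_iff_re_im.1 (hBA i j)).1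
  refine posSemidef_of_sum_norm_le_diag (isHermitian_lduiMatrix hA hB) ?_
  rintro ⟨i, j⟩
  obtain rfl | hij := eq_or_ne i j
  · have hoff : ∀ q ∈ Finset.univ.erase (i, i), ‖lduiMatrix A B (i, i) q‖ = 0 := by
      rintro ⟨k, l⟩ hq
      have : ¬ (i = k ∧ i = l) := by grind
      have : ¬ (i = l ∧ i = k) := by grind
      simp [lduiMatrix_apply, *]
    rw [Finset.sum_eq_zero hoff]
    have hBre : -‖B i i‖ ≤ RCLike.re (B i i) := (abs_le.1 (RCLike.abs_re_le_norm _)).1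
    simpa [lduiMatrix_apply] using by linarith [hre i i]
  · have hoff : ∀ q ∈ Finset.univ.erase (i, j), q ≠ (j, i) → ‖lduiMatrix A B (i, j) q‖ = 0 := by
      rintro ⟨k, l⟩ hq hne
      have : ¬ (i = k ∧ j = l) := by grind
      have : ¬ (i = l ∧ j = k) := by grind
      simp [lduiMatrix_apply, *]
    rw [Finset.sum_eq_single_of_mem (j, i) (by grind) hoff]
    simpa [lduiMatrix_apply, hij, hij.symm] using hre i j

end LDUI

section DiagonalVectors

theorem rank_toMat_vec_diagonal {d : ℕ} (a : Fin d → ℂ) :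
    (toMat d (vec (diagonal a))).rank = Fintype.card {i // a i ≠ 0} := by
  change (diagonal a)ᵀ.rank = _
  rw [diagonal_transpose, rank_diagonal]

variable {n : Type*} [Fintype n] [DecidableEq n]

theorem sum_norm_sq_vec_diagonal {E : Type*} [SeminormedAddGroup E] (a : n → E) :
    ∑ p, ‖vec (diagonal a) p‖ ^ 2 = ∑ i, ‖a i‖ ^ 2 := by
  simp [Fintype.sum_prod_type, vec, diagonal_apply, apply_ite norm, ite_pow]

theorem star_vec_diagonal_dotProduct_vec_diagonal {R : Type*} [NonUnitalNonAssocSemiring R]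
    [StarRing R] (a b : n → R) :
    star (vec (diagonal a)) ⬝ᵥ vec (diagonal b) = star a ⬝ᵥ b := by
  rw [star_vec_dotProduct_vec, diagonal_conjTranspose, diagonal_mul_diagonal, trace_diagonal]
  rfl

theorem ptB_lduiMatrix_mulVec_vec_diagonal {d : ℕ} (A B : Matrix (Fin d) (Fin d) ℂ)
    (a : Fin d → ℂ) :
    ptB d (lduiMatrix A B) *ᵥ vec (diagonal a) = vec (diagonal ((diagonal A.diag + B) *ᵥ a)) := by
  ext ⟨i, j⟩
  have hsum : (ptB d (lduiMatrix A B) *ᵥ vec (diagonal a)) (i, j) =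
      ∑ k, lduiMatrix A B (i, k) (k, j) * a k := by
    simp [mulVec, dotProduct, ptB, Fintype.sum_prod_type, vec, diagonal_apply]
  rw [hsum]
  obtain rfl | hij := eq_or_ne i j
  · simp [lduiMatrix_apply, vec, add_mulVec, add_mul, Finset.sum_add_distrib,
      mulVec, dotProduct, diagonal_apply, eq_comm]
  · have hzero (k : Fin d) : lduiMatrix A B (i, k) (k, j) = 0 := by
      have : ¬ (i = k ∧ k = j) := by grind
      simp [lduiMatrix_apply, *]
    simp [hzero, vec, hij.symm]

end DiagonalVectors

section ExampleState

/-- The coefficients of `|ij⟩⟨ij|` in the example state. -/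
noncomputable def diagWeights17 : Matrix (Fin 3) (Fin 3) ℂ :=
  (1 / 16 : ℂ) • !![1, 2, 2; 2, 1, 2; 2, 2, 2]

/-- The coefficients of `|ij⟩⟨ji|`, `i ≠ j`, in the example state. -/
noncomputable def flipWeights17 : Matrix (Fin 3) (Fin 3) ℂ :=
  (1 / 16 : ℂ) • !![0, -1, 2; -1, 0, 2; 2, 2, 0]

theorem rho17_eq_lduiMatrix : rho17 = lduiMatrix diagWeights17 flipWeights17 := by
  ext ⟨i, j⟩ ⟨k, l⟩
  fin_cases i <;> fin_cases j <;> fin_cases k <;> fin_cases l <;>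
    simp [rho17, lduiMatrix_apply, diagWeights17, flipWeights17]

theorem psi17_eq_smul_vec_diagonal :
    psi17 = (Real.sqrt 3 : ℂ)⁻¹ • vec (diagonal ![1, 1, -1]) := by
  ext ⟨i, j⟩
  fin_cases i <;> fin_cases j <;> simp [psi17, vec, div_eq_inv_mul]

theorem isHermitian_flipWeights17 : flipWeights17.IsHermitian := by
  ext i j
  fin_cases i <;> fin_cases j <;> simp [flipWeights17]

theorem isSymm_diagWeights17 : diagWeights17.IsSymm := by
  ext i j
  fin_cases i <;> fin_cases j <;> simp [diagWeights17]

theorem norm_flipWeights17_le (i j : Fin 3) :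
    ((‖flipWeights17 i j‖ : ℝ) : ℂ) ≤ diagWeights17 i j := by
  fin_cases i <;> fin_cases j <;> norm_num [flipWeights17, diagWeights17, Complex.le_def]

theorem norm_flipWeights17_le_sum_row_sub (i j : Fin 3) :
    ((‖flipWeights17 i j‖ : ℝ) : ℂ) ≤
      ∑ k, diagWeights17 i k + flipWeights17 i i - diagWeights17 i j := by
  fin_cases i <;> fin_cases j <;>
    norm_num [flipWeights17, diagWeights17, Complex.le_def, Fin.sum_univ_succ]

theorem norm_flipWeights17_le_sum_col_sub (i j : Fin 3) :
    ((‖flipWeights17 i j‖ : ℝ) : ℂ) ≤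
      ∑ k, diagWeights17 k j + flipWeights17 j j - diagWeights17 i j := by
  have hnorm : ‖flipWeights17 i j‖ = ‖flipWeights17 j i‖ := by
    rw [← isHermitian_flipWeights17.apply, norm_star]
  simpa only [hnorm, isSymm_diagWeights17.apply] using norm_flipWeights17_le_sum_row_sub j i

theorem posSemidef_rho17 : rho17.PosSemidef := by
  rw [rho17_eq_lduiMatrix]
  exact posSemidef_lduiMatrix isHermitian_flipWeights17 norm_flipWeights17_le

theorem trace_rho17 : rho17.trace = 1 := by
  rw [rho17_eq_lduiMatrix, trace_lduiMatrix]
  norm_num [Matrix.trace, diagWeights17, flipWeights17, Fin.sum_univ_succ]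

theorem posSemidef_rhoA17_kronecker_one_sub_rho17 :
    (rhoA17 ⊗ₖ (1 : Matrix (Fin 3) (Fin 3) ℂ) - rho17).PosSemidef := by
  change (partialTraceRight rho17 ⊗ₖ 1 - rho17).PosSemidef
  rw [rho17_eq_lduiMatrix, partialTraceRight_kronecker_one_sub_lduiMatrix]
  refine posSemidef_lduiMatrix isHermitian_flipWeights17.neg fun i j => ?_
  rw [Matrix.neg_apply, norm_neg]
  exact norm_flipWeights17_le_sum_row_sub i j

theorem posSemidef_one_kronecker_rhoB17_sub_rho17 :
    ((1 : Matrix (Fin 3) (Fin 3) ℂ) ⊗ₖ rhoB17 - rho17).PosSemidef := by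
  change (1 ⊗ₖ partialTraceLeft rho17 - rho17).PosSemidef
  rw [rho17_eq_lduiMatrix, one_kronecker_partialTraceLeft_sub_lduiMatrix]
  refine posSemidef_lduiMatrix isHermitian_flipWeights17.neg fun i j => ?_
  rw [Matrix.neg_apply, norm_neg]
  exact norm_flipWeights17_le_sum_col_sub i j

theorem sum_norm_sq_psi17 : ∑ p, ‖psi17 p‖ ^ 2 = 1 := by
  rw [psi17_eq_smul_vec_diagonal, ← vec_smul, ← diagonal_smul, sum_norm_sq_vec_diagonal]
  norm_num [Fin.sum_univ_succ]

theorem ptB_rho17_mulVec_vec_diagonal (a : Fin 3 → ℂ) :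
    ptB 3 rho17 *ᵥ vec (diagonal a) =
      vec (diagonal (((1 / 16 : ℂ) • !![1, -1, 2; -1, 1, 2; 2, 2, 2]) *ᵥ a)) := by
  rw [rho17_eq_lduiMatrix, ptB_lduiMatrix_mulVec_vec_diagonal]
  congr 3
  ext i j
  fin_cases i <;> fin_cases j <;> simp [diagWeights17, flipWeights17]

theorem ptB_rho17_mulVec_psi17 : ptB 3 rho17 *ᵥ psi17 = ((-(1 / 8 : ℝ) : ℝ) : ℂ) • psi17 := by
  have heig : ((1 / 16 : ℂ) • !![(1 : ℂ), -1, 2; -1, 1, 2; 2, 2, 2]) *ᵥ ![1, 1, -1] =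
      ((-(1 / 8 : ℝ) : ℝ) : ℂ) • ![1, 1, -1] := by
    ext i
    fin_cases i <;> norm_num [mulVec, dotProduct, Fin.sum_univ_succ]
  rw [psi17_eq_smul_vec_diagonal, mulVec_smul, ptB_rho17_mulVec_vec_diagonal, heig,
    diagonal_smul, vec_smul, smul_comm]

/-- The witness of 1-distillability, `|00⟩ - |22⟩`. On the span of `|00⟩` and `|22⟩` the partial
transpose has the block `(1 / 16) • !![1, 2; 2, 2]`, whose determinant is negative. -/
noncomputable def phi17 : Fin 3 × Fin 3 → ℂ := vec (diagonal ![1, 0, -1])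

theorem phi17_ne_zero : phi17 ≠ 0 := by
  simp [phi17, vec_eq_zero_iff]

theorem rank_toMat_phi17_le : (toMat 3 phi17).rank ≤ 2 := by
  rw [phi17, rank_toMat_vec_diagonal, Fintype.card_subtype, Finset.card_filter]
  simp [Fin.sum_univ_succ]

theorem re_star_phi17_dotProduct_ptB_rho17_mulVec_neg :
    (star phi17 ⬝ᵥ ptB 3 rho17 *ᵥ phi17).re < 0 := by
  rw [phi17, ptB_rho17_mulVec_vec_diagonal, star_vec_diagonal_dotProduct_vec_diagonal]
  norm_num [mulVec, dotProduct, Fin.sum_univ_succ]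

end ExampleState

/-- The example state is a density matrix satisfying the reduction criterion, yet its
partial transpose has eigenvector `ψ` with eigenvalue `-1/8`, and it is 1-distillable. -/
theorem example_state_distillable :
    rho17.PosSemidef ∧ rho17.trace = 1 ∧
    ((1 : Matrix (Fin 3) (Fin 3) ℂ) ⊗ₖ rhoB17 - rho17).PosSemidef ∧
    (rhoA17 ⊗ₖ (1 : Matrix (Fin 3) (Fin 3) ℂ) - rho17).PosSemidef ∧
    (∑ p, ‖psi17 p‖ ^ 2) = 1 ∧
    (ptB 3 rho17).mulVec psi17 = ((-(1 / 8 : ℝ) : ℝ) : ℂ) • psi17 ∧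
    ∃ φ : Fin 3 × Fin 3 → ℂ, φ ≠ 0 ∧ (toMat 3 φ).rank ≤ 2 ∧
      (star φ ⬝ᵥ (ptB 3 rho17).mulVec φ).re < 0 := by
  exact ⟨posSemidef_rho17, trace_rho17, posSemidef_one_kronecker_rhoB17_sub_rho17,
    posSemidef_rhoA17_kronecker_one_sub_rho17, sum_norm_sq_psi17, ptB_rho17_mulVec_psi17,
    phi17, phi17_ne_zero, rank_toMat_phi17_le, re_star_phi17_dotProduct_ptB_rho17_mulVec_neg⟩
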